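/- Let x = (x', x'') ∈ ℝ^N × ℝ^{n-N} with 2 ≤ N ≤ n and let 1 < p < N, with 2 < p. Then for every smooth compactly supported complex-valued function u on ℝ^n whose support does not meet the set {x' = 0}, one has (∫_{ℝ^n} |u|^p / |x'|^p dx)^{1/p} ≤ (p/(N-p)) · (∫_{ℝ^n} |∇u|^p dx)^{1/p}. -/

import Mathlib

/-!
The proof is the divergence-theorem argument. Away from `{x' = 0}` the field `x' / |x'|^p` has
divergence `(N - p) / |x'|^p`. Since `p > 1`, `|u|^p` is `C¹`, and as the support of `u` avoids
`{x' = 0}`, the field `|u|^p x' / |x'|^p` is `C¹` with compact support on all of `ℝ^n`, so the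
integral of its divergence vanishes. Bounding the term with the derivative of `|u|^p` by means of
`|∇(|u|^p)| ≤ p |u|^(p-1) |∇u|` (`pointwise_bound`) gives, with `h = |u| / |x'|`,

  `(N - p) ∫ h^p ≤ p ∫ h^(p-1) |∇u| ≤ p (∫ h^p)^((p-1)/p) (∫ |∇u|^p)^(1/p)`,

the last step being Hölder's inequality. Dividing by `(∫ h^p)^((p-1)/p)` gives the claim.
-/

open MeasureTheory Real

/-- The Euclidean Laplacian of a function on `ℝ^n`. -/
noncomputable def lap {n : ℕ} {E : Type*} [NormedAddCommGroup E] [NormedSpace ℝ E]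
    (f : EuclideanSpace ℝ (Fin n) → E) (x : EuclideanSpace ℝ (Fin n)) : E :=
  ∑ i : Fin n,
    fderiv ℝ (fun y => fderiv ℝ f y (EuclideanSpace.single i 1)) x (EuclideanSpace.single i 1)

/-- The Euclidean norm of the gradient of a function on `ℝ^n`. -/
noncomputable def gradNorm {n : ℕ} {E : Type*} [NormedAddCommGroup E] [NormedSpace ℝ E]
    (f : EuclideanSpace ℝ (Fin n) → E) (x : EuclideanSpace ℝ (Fin n)) : ℝ :=
  Real.sqrt (∑ i : Fin n, ‖fderiv ℝ f x (EuclideanSpace.single i 1)‖ ^ 2)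

/-- The Euclidean norm of the first `N` coordinates `x'` of a point `x ∈ ℝ^n`. -/
noncomputable def prNorm (N n : ℕ) (h : N ≤ n) (x : EuclideanSpace ℝ (Fin n)) : ℝ :=
  Real.sqrt (∑ i : Fin N, (x (Fin.castLE h i)) ^ 2)

section BadialeTarantello

variable {N n : ℕ} (hNn : N ≤ n)

/-- The linear projection `x ↦ (x', 0)` of `ℝ^n` onto the first `N` coordinates. -/
noncomputable def headPart (x : EuclideanSpace ℝ (Fin n)) : EuclideanSpace ℝ (Fin n) :=
  ∑ i : Fin N, x (Fin.castLE hNn i) • EuclideanSpace.single (Fin.castLE hNn i) (1 : ℝ)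

/-- The squared norm `|x'|²`. -/
noncomputable def headSq (x : EuclideanSpace ℝ (Fin n)) : ℝ :=
  ∑ i : Fin N, x (Fin.castLE hNn i) ^ 2

lemma headSq_nonneg (x : EuclideanSpace ℝ (Fin n)) : 0 ≤ headSq hNn x :=
  Finset.sum_nonneg fun _ _ => sq_nonneg _

lemma prNorm_sq (x : EuclideanSpace ℝ (Fin n)) : prNorm N n hNn x ^ 2 = headSq hNn x :=
  Real.sq_sqrt (headSq_nonneg hNn x)

lemma prNorm_nonneg (x : EuclideanSpace ℝ (Fin n)) : 0 ≤ prNorm N n hNn x :=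
  Real.sqrt_nonneg _

lemma norm_headPart (x : EuclideanSpace ℝ (Fin n)) : ‖headPart hNn x‖ = prNorm N n hNn x := by
  rw [← sq_eq_sq₀ (norm_nonneg _) (prNorm_nonneg hNn x), prNorm_sq, ← real_inner_self_eq_norm_sq,
    headPart, headSq, sum_inner]
  refine Finset.sum_congr rfl fun i _ => ?_
  rw [inner_sum, Finset.sum_eq_single i]
  · rw [real_inner_self_eq_norm_sq, norm_smul, PiLp.norm_single]
    simp
  · intro j _ hj
    have hne : Fin.castLE hNn j ≠ Fin.castLE hNn i := fun h => hj (by simpa using h)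
    rw [real_inner_smul_left, real_inner_smul_right, EuclideanSpace.inner_single_left]
    simp [hne.symm]
  · simp

lemma prNorm_rpow_neg (x : EuclideanSpace ℝ (Fin n)) (p : ℝ) :
    (prNorm N n hNn x ^ p)⁻¹ = headSq hNn x ^ (-p / 2) := by
  rw [← Real.rpow_neg (prNorm_nonneg hNn x), ← prNorm_sq, ← Real.rpow_natCast,
    ← Real.rpow_mul (prNorm_nonneg hNn x)]
  congr 1
  push_cast
  ring

lemma continuous_prNorm : Continuous (prNorm N n hNn) := by
  unfold prNorm
  fun_prop

lemma contDiff_headSq : ContDiff ℝ 1 (headSq (N := N) hNn) := by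
  unfold headSq
  fun_prop

lemma hasFDerivAt_coord (k : Fin n) (x : EuclideanSpace ℝ (Fin n)) :
    HasFDerivAt (fun y : EuclideanSpace ℝ (Fin n) => y k)
      (EuclideanSpace.proj k : EuclideanSpace ℝ (Fin n) →L[ℝ] ℝ) x :=
  (EuclideanSpace.proj k : EuclideanSpace ℝ (Fin n) →L[ℝ] ℝ).hasFDerivAt

lemma fderiv_headSq_single (i : Fin N) (x : EuclideanSpace ℝ (Fin n)) :
    fderiv ℝ (headSq hNn) x (EuclideanSpace.single (Fin.castLE hNn i) 1)
      = 2 * x (Fin.castLE hNn i) := by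
  have h : HasFDerivAt (headSq hNn) (∑ j : Fin N, (2 * x (Fin.castLE hNn j)) •
      (EuclideanSpace.proj (Fin.castLE hNn j) : EuclideanSpace ℝ (Fin n) →L[ℝ] ℝ)) x := by
    unfold headSq
    refine HasFDerivAt.fun_sum fun j _ => ?_
    simpa using (hasFDerivAt_coord (Fin.castLE hNn j) x).pow 2
  rw [h.fderiv]
  simp

lemma opNorm_fderiv_le_gradNorm (u : EuclideanSpace ℝ (Fin n) → ℂ) (x : EuclideanSpace ℝ (Fin n)) :
    ‖fderiv ℝ u x‖ ≤ gradNorm u x := by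
  refine ContinuousLinearMap.opNorm_le_bound _ (Real.sqrt_nonneg _) fun v => ?_
  have hv : v = ∑ i, v i • EuclideanSpace.single i (1 : ℝ) := by
    simpa using ((EuclideanSpace.basisFun (Fin n) ℝ).sum_repr v).symm
  calc ‖fderiv ℝ u x v‖
      = ‖∑ i, v i • fderiv ℝ u x (EuclideanSpace.single i 1)‖ := by
        conv_lhs => rw [hv]
        simp only [map_sum, map_smul]
    _ ≤ ∑ i, ‖fderiv ℝ u x (EuclideanSpace.single i 1)‖ * ‖v i‖ := by
        refine (norm_sum_le _ _).trans (le_of_eq (Finset.sum_congr rfl fun i _ => ?_))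
        rw [norm_smul, mul_comm]
    _ ≤ gradNorm u x * ‖v‖ := by
        rw [EuclideanSpace.norm_eq]
        exact Real.sum_mul_le_sqrt_mul_sqrt _ _ _


lemma gradNorm_nonneg (u : EuclideanSpace ℝ (Fin n) → ℂ) (x : EuclideanSpace ℝ (Fin n)) :
    0 ≤ gradNorm u x := Real.sqrt_nonneg _

/-- The `i`-th component of the vector field `|u|^p x' / |x'|^p`. -/
noncomputable def fieldComp (p : ℝ) (u : EuclideanSpace ℝ (Fin n) → ℂ) (i : Fin N)
    (x : EuclideanSpace ℝ (Fin n)) : ℝ :=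
  ‖u x‖ ^ p * (x (Fin.castLE hNn i) * headSq hNn x ^ (-p / 2))

variable {p : ℝ} {u : EuclideanSpace ℝ (Fin n) → ℂ}

lemma headSq_ne_zero (hsupp : ∀ x ∈ tsupport u, prNorm N n hNn x ≠ 0)
    {x : EuclideanSpace ℝ (Fin n)} (hx : x ∈ tsupport u) : headSq hNn x ≠ 0 := by
  rw [← prNorm_sq]
  exact pow_ne_zero 2 (hsupp x hx)

lemma fieldComp_eventuallyEq_zero (hp : 1 < p) (i : Fin N) {x : EuclideanSpace ℝ (Fin n)}
    (hx : x ∉ tsupport u) : fieldComp hNn p u i =ᶠ[nhds x] fun _ => 0 := by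
  filter_upwards [notMem_tsupport_iff_eventuallyEq.1 hx] with y hy
  simp [fieldComp, hy, Real.zero_rpow (by linarith : p ≠ 0)]

lemma contDiff_fieldComp (hp : 1 < p) (hu : ContDiff ℝ 1 u)
    (hsupp : ∀ x ∈ tsupport u, prNorm N n hNn x ≠ 0) (i : Fin N) :
    ContDiff ℝ 1 (fieldComp hNn p u i) := by
  rw [contDiff_iff_contDiffAt]
  intro x
  by_cases hx : x ∈ tsupport u
  · have h1 : ContDiffAt ℝ 1 (fun y => ‖u y‖ ^ p) x := (hu.norm_rpow hp).contDiffAt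
    have h2 : ContDiffAt ℝ 1 (fun y : EuclideanSpace ℝ (Fin n) => y (Fin.castLE hNn i)) x := by
      fun_prop
    exact h1.mul (h2.mul
      ((contDiff_headSq hNn).contDiffAt.rpow_const_of_ne (headSq_ne_zero hNn hsupp hx)))
  · exact contDiffAt_const.congr_of_eventuallyEq (fieldComp_eventuallyEq_zero hNn hp i hx)

lemma hasCompactSupport_fieldComp (hp : 1 < p) (hcs : HasCompactSupport u) (i : Fin N) :
    HasCompactSupport (fieldComp hNn p u i) :=
  HasCompactSupport.intro hcs fun _ hx => (fieldComp_eventuallyEq_zero hNn hp i hx).eq_of_nhds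

/-- The partial derivatives of a compactly supported `C¹` function are integrable, with
vanishing integral. -/
lemma integral_fderiv_eq_zero_of_compactSupport {F : EuclideanSpace ℝ (Fin n) → ℝ}
    (hF : ContDiff ℝ 1 F) (hc : HasCompactSupport F) (v : EuclideanSpace ℝ (Fin n)) :
    Integrable (fun x => fderiv ℝ F x v) ∧ ∫ x, fderiv ℝ F x v = 0 := by
  have hi : Integrable (fun x => fderiv ℝ F x v) :=
    ((hF.continuous_fderiv one_ne_zero).clm_apply continuous_const).integrable_of_hasCompactSupport
      (hc.fderiv_apply ℝ v)
  refine ⟨hi, ?_⟩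
  have h := integral_mul_fderiv_eq_neg_fderiv_mul_of_integrable
    (μ := (volume : Measure (EuclideanSpace ℝ (Fin n)))) (f := fun _ => (1 : ℝ)) (g := F) (v := v)
    (by simp) (by simpa using hi)
    (by simpa using hF.continuous.integrable_of_hasCompactSupport hc)
    (fun x _ => differentiableAt_const _) (fun x _ => (hF.differentiable one_ne_zero) x)
  simpa using h

/-- The divergence of `|u|^p x' / |x'|^p` on the support of `u`, using
`div (x' / |x'|^p) = (N - p) / |x'|^p`. -/
lemma sum_fderiv_fieldComp (hp : 1 < p) (hu : ContDiff ℝ 1 u)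
    (hsupp : ∀ x ∈ tsupport u, prNorm N n hNn x ≠ 0) {x : EuclideanSpace ℝ (Fin n)}
    (hx : x ∈ tsupport u) :
    ∑ i : Fin N, fderiv ℝ (fieldComp hNn p u i) x (EuclideanSpace.single (Fin.castLE hNn i) 1)
      = fderiv ℝ (fun y => ‖u y‖ ^ p) x (headPart hNn x) * headSq hNn x ^ (-p / 2)
        + (N - p) * (‖u x‖ ^ p * headSq hNn x ^ (-p / 2)) := by
  have hr := headSq_ne_zero hNn hsupp hx
  have hg : HasFDerivAt (fun y => ‖u y‖ ^ p) (fderiv ℝ (fun y => ‖u y‖ ^ p) x) x :=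
    ((hu.norm_rpow hp).differentiable one_ne_zero x).hasFDerivAt
  have hw := (((contDiff_headSq hNn).differentiable one_ne_zero x).hasFDerivAt).rpow_const
    (p := -p / 2) (Or.inl hr)
  have key : ∀ i : Fin N,
      fderiv ℝ (fieldComp hNn p u i) x (EuclideanSpace.single (Fin.castLE hNn i) 1)
      = x (Fin.castLE hNn i) * fderiv ℝ (fun y => ‖u y‖ ^ p) x
          (EuclideanSpace.single (Fin.castLE hNn i) 1) * headSq hNn x ^ (-p / 2)
        + ‖u x‖ ^ p * headSq hNn x ^ (-p / 2)
        - p * ‖u x‖ ^ p * headSq hNn x ^ (-p / 2 - 1) * x (Fin.castLE hNn i) ^ 2 := by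
    intro i
    have h := hg.mul ((hasFDerivAt_coord (Fin.castLE hNn i) x).mul hw)
    have h' : HasFDerivAt (fieldComp hNn p u i) _ x := h
    rw [h'.fderiv]
    simp [fderiv_headSq_single]
    ring
  rw [Finset.sum_congr rfl fun i _ => key i, Finset.sum_sub_distrib, Finset.sum_add_distrib,
    Finset.sum_const, ← Finset.mul_sum, ← Finset.sum_mul]
  have hsum : headSq hNn x ^ (-p / 2 - 1) * headSq hNn x = headSq hNn x ^ (-p / 2) := by
    rw [Real.rpow_sub_one hr, div_mul_cancel₀ _ hr]
  change _ - p * ‖u x‖ ^ p * headSq hNn x ^ (-p / 2 - 1) * headSq hNn x = _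
  rw [mul_assoc _ (headSq hNn x ^ (-p / 2 - 1)), hsum]
  simp [headPart, map_sum]
  ring

/-- Pointwise form of the inequality: `(N - p) (|u|/|x'|)^p` is at most a divergence plus
`p (|u|/|x'|)^(p-1) |∇u|`. -/
lemma pointwise_bound (hp : 1 < p) (hu : ContDiff ℝ 1 u)
    (hsupp : ∀ x ∈ tsupport u, prNorm N n hNn x ≠ 0) (x : EuclideanSpace ℝ (Fin n)) :
    (N - p) * (‖u x‖ / prNorm N n hNn x) ^ p ≤
      (∑ i : Fin N, fderiv ℝ (fieldComp hNn p u i) x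
        (EuclideanSpace.single (Fin.castLE hNn i) 1))
      + p * ((‖u x‖ / prNorm N n hNn x) ^ (p - 1) * gradNorm u x) := by
  by_cases hx : x ∈ tsupport u
  · rw [sum_fderiv_fieldComp hNn hp hu hsupp hx]
    have hP := prNorm_nonneg hNn x
    have hP0 : 0 < prNorm N n hNn x := lt_of_le_of_ne hP (hsupp x hx).symm
    have hw : (‖u x‖ / prNorm N n hNn x) ^ p = ‖u x‖ ^ p * headSq hNn x ^ (-p / 2) := by
      rw [Real.div_rpow (norm_nonneg _) hP, div_eq_mul_inv, prNorm_rpow_neg]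
    have hw' : prNorm N n hNn x * headSq hNn x ^ (-p / 2)
        = (prNorm N n hNn x ^ (p - 1))⁻¹ := by
      rw [← prNorm_rpow_neg, Real.rpow_sub_one hP0.ne', inv_div, div_eq_mul_inv]
    have hW : 0 ≤ headSq hNn x ^ (-p / 2) := Real.rpow_nonneg (headSq_nonneg hNn x) _
    have hD : |fderiv ℝ (fun y => ‖u y‖ ^ p) x (headPart hNn x)|
        ≤ p * ‖u x‖ ^ (p - 1) * gradNorm u x * prNorm N n hNn x := by
      refine ((fderiv ℝ (fun y => ‖u y‖ ^ p) x).le_opNorm _).trans ?_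
      rw [norm_headPart]
      refine mul_le_mul_of_nonneg_right ?_ hP
      refine (norm_fderiv_norm_rpow_le (hu.differentiable one_ne_zero) hp).trans ?_
      exact mul_le_mul_of_nonneg_left (opNorm_fderiv_le_gradNorm u x) (by positivity)
    have h1 : -(p * ((‖u x‖ / prNorm N n hNn x) ^ (p - 1) * gradNorm u x))
        ≤ fderiv ℝ (fun y => ‖u y‖ ^ p) x (headPart hNn x) * headSq hNn x ^ (-p / 2) := by
      have h2 := mul_le_mul_of_nonneg_right (neg_le_of_abs_le hD) hW
      refine le_trans (le_of_eq ?_) h2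
      rw [Real.div_rpow (norm_nonneg _) hP, div_eq_mul_inv, ← hw']
      ring
    rw [hw]
    linarith
  · have h0 : u x = 0 := image_eq_zero_of_notMem_tsupport hx
    have hF : ∀ i : Fin N, fderiv ℝ (fieldComp hNn p u i) x = 0 := fun i => by
      rw [(fieldComp_eventuallyEq_zero hNn hp i hx).fderiv_eq]
      simp
    simp [h0, hF, Real.zero_rpow (by linarith : p ≠ 0), Real.zero_rpow (by linarith : p - 1 ≠ 0)]

lemma continuous_quotient (hu : Continuous u)
    (hsupp : ∀ x ∈ tsupport u, prNorm N n hNn x ≠ 0) :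
    Continuous fun x => ‖u x‖ / prNorm N n hNn x := by
  rw [continuous_iff_continuousAt]
  intro x
  by_cases hx : x ∈ tsupport u
  · exact hu.norm.continuousAt.div (continuous_prNorm hNn).continuousAt (hsupp x hx)
  · refine (continuousAt_const (y := (0 : ℝ))).congr ?_
    filter_upwards [notMem_tsupport_iff_eventuallyEq.1 hx] with y hy
    simp [hy]

lemma hasCompactSupport_quotient (hcs : HasCompactSupport u) :
    HasCompactSupport fun x => ‖u x‖ / prNorm N n hNn x :=
  HasCompactSupport.intro hcs fun _ hx => by simp [image_eq_zero_of_notMem_tsupport hx]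

lemma continuous_gradNorm (hu : ContDiff ℝ 1 u) : Continuous (gradNorm u) := by
  have := hu.continuous_fderiv one_ne_zero
  unfold gradNorm
  fun_prop

lemma hasCompactSupport_gradNorm (hcs : HasCompactSupport u) : HasCompactSupport (gradNorm u) :=
  HasCompactSupport.intro (hcs.fderiv ℝ) fun _ hx => by
    simp [gradNorm, image_eq_zero_of_notMem_tsupport hx]

end BadialeTarantello

theorem badiale_tarantello (N n : ℕ) (hN : 2 ≤ N) (hNn : N ≤ n) (p : ℝ)
    (hp1 : 1 < p) (hpN : p < N) (hp2 : 2 < p)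
    (u : EuclideanSpace ℝ (Fin n) → ℂ) (hu : ContDiff ℝ (⊤ : ℕ∞) u) (hcs : HasCompactSupport u)
    (hsupp : ∀ x ∈ tsupport u, prNorm N n hNn x ≠ 0) :
    (∫ x, ‖u x‖ ^ p / prNorm N n hNn x ^ p) ^ (1 / p) ≤
      (p / (N - p)) * (∫ x, gradNorm u x ^ p) ^ (1 / p) := by
  have hu1 : ContDiff ℝ 1 u := hu.of_le (by exact_mod_cast le_top)
  have hp0 : 0 < p := by linarith
  set h : EuclideanSpace ℝ (Fin n) → ℝ := fun x => ‖u x‖ / prNorm N n hNn x with hh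
  have hh0 : ∀ x, 0 ≤ h x := fun x => div_nonneg (norm_nonneg _) (prNorm_nonneg hNn x)
  have hhc : Continuous h := continuous_quotient hNn hu1.continuous hsupp
  have hhs : HasCompactSupport h := hasCompactSupport_quotient hNn hcs
  have hGc := continuous_gradNorm hu1
  have hGs := hasCompactSupport_gradNorm hcs
  have hA : ∀ x, ‖u x‖ ^ p / prNorm N n hNn x ^ p = h x ^ p := fun x =>
    (Real.div_rpow (norm_nonneg _) (prNorm_nonneg hNn x) p).symm
  simp_rw [hA]
  have hsub : 0 < p - 1 := by linarith
  have hpc : Continuous fun x => h x ^ p := hhc.rpow_const fun _ => Or.inr hp0.le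
  have hps : HasCompactSupport fun x => h x ^ p := hhs.rpow_const hp0.ne'
  have hqc : Continuous fun x => h x ^ (p - 1) := hhc.rpow_const fun _ => Or.inr hsub.le
  have hqs : HasCompactSupport fun x => h x ^ (p - 1) := hhs.rpow_const hsub.ne'
  have hdiv := fun i : Fin N => integral_fderiv_eq_zero_of_compactSupport
    (contDiff_fieldComp hNn hp1 hu1 hsupp i) (hasCompactSupport_fieldComp hNn hp1 hcs i)
    (EuclideanSpace.single (Fin.castLE hNn i) 1)
  have hprod : Integrable fun x => h x ^ (p - 1) * gradNorm u x :=
    (hqc.mul hGc).integrable_of_hasCompactSupport (hqs.mul_right)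
  set A := ∫ x, h x ^ p with hAdef
  set B := ∫ x, gradNorm u x ^ p with hBdef
  have hA0 : 0 ≤ A := integral_nonneg fun x => Real.rpow_nonneg (hh0 x) p
  -- The divergence term of the pointwise bound integrates to zero.
  have h1 : (N - p) * A ≤ p * ∫ x, h x ^ (p - 1) * gradNorm u x := by
    have := integral_mono (μ := (volume : Measure (EuclideanSpace ℝ (Fin n))))
      ((hpc.integrable_of_hasCompactSupport hps).const_mul (N - p))
      ((integrable_finsetSum _ fun i _ => (hdiv i).1).add (hprod.const_mul p))
      (pointwise_bound hNn hp1 hu1 hsupp)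
    rw [integral_const_mul, integral_add' (integrable_finsetSum _ fun i _ => (hdiv i).1)
      (hprod.const_mul p), integral_finsetSum _ fun i _ => (hdiv i).1, integral_const_mul] at this
    simpa [(hdiv _).2] using this
  have hconj : (p / (p - 1)).HolderConjugate p := (Real.HolderConjugate.conjExponent hp1).symm
  have h2 : ∫ x, h x ^ (p - 1) * gradNorm u x ≤ A ^ ((p - 1) / p) * B ^ (1 / p) := by
    have := integral_mul_le_Lp_mul_Lq_of_nonneg
      (μ := (volume : Measure (EuclideanSpace ℝ (Fin n)))) hconj
      (f := fun x => h x ^ (p - 1)) (g := gradNorm u)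
      (Filter.Eventually.of_forall fun x => Real.rpow_nonneg (hh0 x) _)
      (Filter.Eventually.of_forall fun x => gradNorm_nonneg u x)
      (hqc.memLp_of_hasCompactSupport hqs) (hGc.memLp_of_hasCompactSupport hGs)
    have he : ∀ x, (h x ^ (p - 1)) ^ (p / (p - 1)) = h x ^ p := fun x => by
      rw [← Real.rpow_mul (hh0 x), mul_div_cancel₀ _ hsub.ne']
    simpa only [he, one_div_div] using this
  have hNp : 0 < (N : ℝ) - p := by linarith
  have hB0 : 0 ≤ B := integral_nonneg fun x => Real.rpow_nonneg (gradNorm_nonneg u x) p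
  rcases hA0.eq_or_lt with hAz | hApos
  · rw [← hAz, Real.zero_rpow (by positivity)]
    positivity
  · -- Divide `(N - p) A ≤ p A^((p-1)/p) B^(1/p)` by the positive factor `A^((p-1)/p)`.
    have hs : A = A ^ ((p - 1) / p) * A ^ (1 / p) := by
      rw [← Real.rpow_add hApos, ← add_div, sub_add_cancel, div_self hp0.ne', Real.rpow_one]
    have hc : 0 < A ^ ((p - 1) / p) := Real.rpow_pos_of_pos hApos _
    have h3 := h1.trans (mul_le_mul_of_nonneg_left h2 hp0.le)
    rw [div_mul_eq_mul_div, le_div_iff₀ hNp]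
    refine le_of_mul_le_mul_left ?_ hc
    calc A ^ ((p - 1) / p) * (A ^ (1 / p) * (N - p))
        = (N - p) * (A ^ ((p - 1) / p) * A ^ (1 / p)) := by ring
      _ = (N - p) * A := by rw [← hs]
      _ ≤ p * (A ^ ((p - 1) / p) * B ^ (1 / p)) := h3
      _ = A ^ ((p - 1) / p) * (p * B ^ (1 / p)) := by ring
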